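/- Let n, m be positive integers, B, σ > 0, and for each e ∈ [m] let ψ_e : {0,1}^{n+1} → [−B, B]. Define w⋆ ∈ ℝ^m by w⋆_e = 2^{−(n+1)} Σ_{(x,y)∈{0,1}^{n+1}} ψ_e(x,y), and for each s ⊆ [n] define w^{(s)} ∈ ℝ^m by w^{(s)}_e = 2^{−n} Σ_{x∈{0,1}^n} ψ_e(x, p_s(x)). Let Q⋆ = N(w⋆, σ² I_m) and Q_s = N(w^{(s)}, σ² I_m). Then Σ_{s⊆[n]} ‖Q⋆ − Q_s‖₁ ≤ B·√(m·2^{n+1}/(π σ²)). -/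

import Mathlib

/-!
Two Gaussians with covariance `σ² I` and means at distance `r` have `L¹` distance at most
`2 r / √(2πσ²)`: by rotation invariance the means may be assumed to differ in one coordinate only,
where the distance is twice the mass that a one-dimensional Gaussian gives to an interval of
length `r` (`integral_abs_gaussDensity_sub_le`). The constant is the optimal one.

The deviation `w⋆ - w^{(s)}` has as its `e`-th entry the `s`-th Walsh coefficient of a function
bounded by `B`, so Parseval gives `∑_s ‖w⋆ - w^{(s)}‖² ≤ m B²` (`sum_sq_mean_sub_le`).
By Cauchy–Schwarz over the `2^n` sets `s`, `∑_s ‖w⋆ - w^{(s)}‖ ≤ B √(m 2^n)`, and multiplying by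
`2 / √(2πσ²)` yields the claim.
-/

open Finset MeasureTheory

/-- The parity function indexed by `s ⊆ [n]` on `{0,1}^n` (encoded by `Bool`):
`p_s(x) = ⊕_{i∈s} x_i`. -/
def parity {n : ℕ} (s : Finset (Fin n)) (x : Fin n → Bool) : Bool :=
  decide (Odd (s.filter fun i => x i = true).card)

/-- The density of the Gaussian measure `N(μ, σ² I_m)` on `ℝ^m`. -/
noncomputable def gaussDensity (m : ℕ) (σ : ℝ) (μ : Fin m → ℝ) (v : Fin m → ℝ) : ℝ :=
  (2 * Real.pi * σ ^ 2) ^ (-(m : ℝ) / 2) *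
    Real.exp (-(∑ e, (v e - μ e) ^ 2) / (2 * σ ^ 2))

/-! ### The total variation distance of two Gaussians -/

/-- In dimension one the difference of a centred Gaussian and its translate by `t` is positive
exactly to the left of `t / 2` and has integral zero, so its `L¹` norm is twice its integral over
`(-∞, t / 2]`, which telescopes to the Gaussian mass of `[-t / 2, t / 2]`. -/
lemma integral_abs_gaussian_sub_shift_le (c t : ℝ) (hc : 0 < c) (ht : 0 ≤ t) :
    ∫ x : ℝ, |Real.exp (-c * x ^ 2) - Real.exp (-c * (x - t) ^ 2)| ≤ 2 * t := by
  set g : ℝ → ℝ := fun x => Real.exp (-c * x ^ 2) with hg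
  have hgi : Integrable g := integrable_exp_neg_mul_sq hc
  have hgti : Integrable (fun x => g (x - t)) := hgi.comp_sub_right t
  have hdi : Integrable (fun x => g x - g (x - t)) := hgi.sub hgti
  have h0 : ∫ x, (g x - g (x - t)) = 0 := by
    rw [integral_sub hgi hgti, integral_sub_right_eq_self g t, sub_self]
  have hadd := integral_add_compl (measurableSet_Iic (a := t / 2)) hdi
  have haddabs := integral_add_compl (measurableSet_Iic (a := t / 2)) hdi.abs
  have hleft : ∫ x in Set.Iic (t / 2), |g x - g (x - t)|
      = ∫ x in Set.Iic (t / 2), (g x - g (x - t)) := by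
    refine setIntegral_congr_fun measurableSet_Iic fun x hx => abs_of_nonneg ?_
    have hx' : x ≤ t / 2 := hx
    simp only [hg, sub_nonneg, Real.exp_le_exp]
    nlinarith [mul_nonneg hc.le (mul_nonneg ht (by linarith : 0 ≤ t - 2 * x))]
  have hright : ∫ x in (Set.Iic (t / 2))ᶜ, |g x - g (x - t)|
      = - ∫ x in (Set.Iic (t / 2))ᶜ, (g x - g (x - t)) := by
    rw [← integral_neg]
    refine setIntegral_congr_fun measurableSet_Iic.compl fun x hx => abs_of_nonpos ?_
    have hx' : t / 2 < x := not_le.mp hx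
    simp only [hg, sub_nonpos, Real.exp_le_exp]
    nlinarith [mul_nonneg hc.le (mul_nonneg ht (by linarith : 0 ≤ 2 * x - t))]
  have hshift : ∫ x in Set.Iic (t / 2), g (x - t) = ∫ x in Set.Iic (-(t / 2)), g x := by
    have hpre : (fun x : ℝ => x - t) ⁻¹' Set.Iic (-(t / 2)) = Set.Iic (t / 2) := by
      ext x
      simp only [Set.mem_preimage, Set.mem_Iic]
      constructor <;> intro h <;> linarith
    rw [← hpre]
    exact (measurePreserving_sub_right volume t).setIntegral_preimage_emb
      (MeasurableEquiv.subRight t).measurableEmbedding g _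
  have hmain : ∫ x in Set.Iic (t / 2), (g x - g (x - t)) ≤ t := by
    rw [integral_sub hgi.integrableOn hgti.integrableOn, hshift,
      intervalIntegral.integral_Iic_sub_Iic hgi.integrableOn hgi.integrableOn]
    have hle : ∫ x in (-(t / 2))..(t / 2), g x ≤ ∫ x in (-(t / 2))..(t / 2), (1 : ℝ) := by
      refine intervalIntegral.integral_mono_on (by linarith) hgi.intervalIntegrable (by simp) ?_
      intro x _
      simp only [hg, Real.exp_le_one_iff]
      nlinarith [mul_nonneg hc.le (sq_nonneg x)]
    refine hle.trans (le_of_eq ?_)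
    simp
  have : ∫ x, |g x - g (x - t)| ≤ 2 * t := by linarith
  exact this

/-- The rotation step: the integral only depends on `‖d‖`, so `d` may be taken to be a multiple of
a coordinate vector, and then the integrand is a product of functions of one coordinate. -/
lemma integral_abs_gaussian_sub_le (m : ℕ) (c : ℝ) (hc : 0 < c)
    (d : EuclideanSpace ℝ (Fin (m + 1))) :
    ∫ v : EuclideanSpace ℝ (Fin (m + 1)),
        |Real.exp (-c * ‖v‖ ^ 2) - Real.exp (-c * ‖v - d‖ ^ 2)|
      ≤ 2 * ‖d‖ * Real.sqrt (Real.pi / c) ^ m := by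
  set u : EuclideanSpace ℝ (Fin (m + 1)) := EuclideanSpace.single 0 ‖d‖ with hu
  have hnorm : ‖u‖ = ‖d‖ := by simp [hu]
  obtain ⟨R, hR⟩ : ∃ R : EuclideanSpace ℝ (Fin (m + 1)) ≃ₗᵢ[ℝ] EuclideanSpace ℝ (Fin (m + 1)),
      R u = d := ⟨_, Submodule.reflection_sub hnorm⟩
  have hrot : ∫ v : EuclideanSpace ℝ (Fin (m + 1)),
        |Real.exp (-c * ‖v‖ ^ 2) - Real.exp (-c * ‖v - d‖ ^ 2)|
      = ∫ v : EuclideanSpace ℝ (Fin (m + 1)),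
        |Real.exp (-c * ‖v‖ ^ 2) - Real.exp (-c * ‖v - u‖ ^ 2)| := by
    rw [← R.measurePreserving.integral_comp R.toHomeomorph.measurableEmbedding]
    congr 1
    ext v
    rw [← hR, ← map_sub, R.norm_map, R.norm_map]
  rw [hrot, ← (PiLp.volume_preserving_toLp (Fin (m + 1))).integral_comp
    (MeasurableEquiv.toLp 2 (Fin (m + 1) → ℝ)).measurableEmbedding]
  let h : Fin (m + 1) → ℝ → ℝ := Fin.cons
    (fun x => |Real.exp (-c * x ^ 2) - Real.exp (-c * (x - ‖d‖) ^ 2)|)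
    (fun _ x => Real.exp (-c * x ^ 2))
  have hprod : ∀ v : Fin (m + 1) → ℝ,
      |Real.exp (-c * ‖WithLp.toLp 2 v‖ ^ 2) - Real.exp (-c * ‖WithLp.toLp 2 v - u‖ ^ 2)|
        = ∏ i, h i (v i) := by
    intro v
    rw [EuclideanSpace.real_norm_sq_eq, EuclideanSpace.real_norm_sq_eq, Fin.sum_univ_succ,
      Fin.sum_univ_succ, Fin.prod_univ_succ]
    simp only [h, hu, Fin.cons_zero, Fin.cons_succ, PiLp.sub_apply, PiLp.single_apply,
      if_true, Fin.succ_ne_zero, if_false, sub_zero, mul_add, Real.exp_add]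
    rw [← sub_mul, abs_mul, abs_of_pos (Real.exp_pos _), mul_sum, Real.exp_sum]
  simp_rw [hprod]
  rw [integral_fintype_prod_volume_eq_prod, Fin.prod_univ_succ]
  simp only [h, Fin.cons_zero, Fin.cons_succ, integral_gaussian, prod_const, card_univ,
    Fintype.card_fin]
  gcongr
  exact integral_abs_gaussian_sub_shift_le c ‖d‖ hc (norm_nonneg _)

lemma integral_abs_gaussDensity_sub_le (m : ℕ) (hm : 0 < m) (σ : ℝ) (hσ : 0 < σ)
    (a b : Fin m → ℝ) :
    ∫ v : Fin m → ℝ, |gaussDensity m σ a v - gaussDensity m σ b v|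
      ≤ 2 / Real.sqrt (2 * Real.pi * σ ^ 2) * Real.sqrt (∑ e, (a e - b e) ^ 2) := by
  obtain ⟨k, rfl⟩ : ∃ k, m = k + 1 := ⟨m - 1, by omega⟩
  set c : ℝ := (2 * σ ^ 2)⁻¹ with hcdef
  have hc : 0 < c := by positivity
  set S : ℝ := 2 * Real.pi * σ ^ 2 with hS
  have hSpos : 0 < S := by positivity
  set d : EuclideanSpace ℝ (Fin (k + 1)) := WithLp.toLp 2 b - WithLp.toLp 2 a with hd
  have hdnorm : ‖d‖ = Real.sqrt (∑ e, (a e - b e) ^ 2) := by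
    rw [← Real.sqrt_sq (norm_nonneg d), EuclideanSpace.real_norm_sq_eq]
    congr 1
    refine sum_congr rfl fun e _ => ?_
    simp only [hd, PiLp.sub_apply]
    ring
  have hform : ∀ p v : Fin (k + 1) → ℝ, gaussDensity (k + 1) σ p v
      = S ^ (-((k + 1 : ℕ) : ℝ) / 2) *
        Real.exp (-c * ‖WithLp.toLp 2 v - WithLp.toLp 2 p‖ ^ 2) := by
    intro p v
    rw [EuclideanSpace.real_norm_sq_eq]
    simp only [gaussDensity, PiLp.sub_apply, hcdef, hS]
    congr 2
    rw [div_eq_mul_inv]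
    ring
  have hCpos : 0 < S ^ (-((k + 1 : ℕ) : ℝ) / 2) := Real.rpow_pos_of_pos hSpos _
  have hdens : ∫ v : Fin (k + 1) → ℝ, |gaussDensity (k + 1) σ a v - gaussDensity (k + 1) σ b v|
      = S ^ (-((k + 1 : ℕ) : ℝ) / 2) * ∫ v : EuclideanSpace ℝ (Fin (k + 1)),
        |Real.exp (-c * ‖v‖ ^ 2) - Real.exp (-c * ‖v - d‖ ^ 2)| := by
    simp_rw [hform, ← mul_sub, abs_mul, abs_of_pos hCpos]
    rw [integral_const_mul]
    congr 1
    rw [← integral_sub_right_eq_self (μ := (volume : Measure (EuclideanSpace ℝ (Fin (k + 1)))))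
        _ (WithLp.toLp 2 a),
      ← (PiLp.volume_preserving_toLp (Fin (k + 1))).integral_comp
        (MeasurableEquiv.toLp 2 (Fin (k + 1) → ℝ)).measurableEmbedding]
    simp only [hd, sub_sub, add_sub_cancel]
  have hpow : S ^ (-((k + 1 : ℕ) : ℝ) / 2) = (Real.sqrt S ^ (k + 1))⁻¹ := by
    rw [neg_div, Real.rpow_neg hSpos.le, Real.sqrt_eq_rpow, ← Real.rpow_natCast,
      ← Real.rpow_mul hSpos.le]
    congr 2
    ring
  have hpic : Real.pi / c = S := by
    rw [hcdef, hS, div_inv_eq_mul]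
    ring
  have hsqrt : 0 < Real.sqrt S := Real.sqrt_pos.mpr hSpos
  have hbound := integral_abs_gaussian_sub_le k c hc d
  rw [hpic] at hbound
  rw [hdens, hpow, ← hdnorm]
  calc _ ≤ (Real.sqrt S ^ (k + 1))⁻¹ * (2 * ‖d‖ * Real.sqrt S ^ k) := by gcongr
    _ = 2 / Real.sqrt S * ‖d‖ := by
      rw [pow_succ]
      field_simp

/-! ### Parseval's identity on the Boolean cube -/

/-- The Walsh character `χ_s(x) = (-1)^{p_s(x)}`, written as a product over the coordinates
in `s`. -/
def walsh {n : ℕ} (s : Finset (Fin n)) (x : Fin n → Bool) : ℝ :=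
  ∏ i ∈ s, if x i = true then -1 else 1

lemma walsh_eq_ite_parity {n : ℕ} (s : Finset (Fin n)) (x : Fin n → Bool) :
    walsh s x = if parity s x = true then -1 else 1 := by
  have h : walsh s x = (-1) ^ (s.filter fun i => x i = true).card := by
    simp [walsh, prod_ite]
  rw [h]
  by_cases ho : Odd (s.filter fun i => x i = true).card
  · simp [parity, ho, ho.neg_one_pow]
  · simp [parity, ho, (Nat.not_odd_iff_even.mp ho).neg_one_pow]

/-- Expanding `∏ i, (1 + χ_i(x) χ_i(y))` over subsets gives the orthogonality relation; a factor
vanishes as soon as `x` and `y` differ in one coordinate. -/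
lemma sum_walsh_mul_walsh {n : ℕ} (x y : Fin n → Bool) :
    ∑ s : Finset (Fin n), walsh s x * walsh s y = if x = y then 2 ^ n else 0 := by
  simp only [walsh, ← prod_mul_distrib]
  rw [← powerset_univ, ← prod_one_add]
  split_ifs with h
  · subst h
    have : ∀ i, (1 : ℝ) + (if x i = true then -1 else 1) * (if x i = true then -1 else 1) = 2 := by
      intro i
      split_ifs <;> norm_num
    simp only [this, prod_const, card_univ, Fintype.card_fin]
  · obtain ⟨i, hi⟩ := Function.ne_iff.mp h
    refine prod_eq_zero (mem_univ i) ?_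
    cases hx : x i <;> cases hy : y i <;> simp_all

lemma sum_sq_walsh_transform {n : ℕ} (f : (Fin n → Bool) → ℝ) :
    ∑ s : Finset (Fin n), (∑ x, walsh s x * f x) ^ 2 = 2 ^ n * ∑ x, f x ^ 2 := by
  calc ∑ s : Finset (Fin n), (∑ x, walsh s x * f x) ^ 2
      = ∑ s : Finset (Fin n), ∑ x, ∑ y, f x * f y * (walsh s x * walsh s y) := by
        refine sum_congr rfl fun s _ => ?_
        rw [sq, sum_mul_sum]
        refine sum_congr rfl fun x _ => sum_congr rfl fun y _ => ?_
        ring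
    _ = ∑ x, ∑ y, f x * f y * ∑ s : Finset (Fin n), walsh s x * walsh s y := by
        rw [sum_comm]
        refine sum_congr rfl fun x _ => ?_
        rw [sum_comm]
        simp only [mul_sum]
    _ = 2 ^ n * ∑ x, f x ^ 2 := by
        simp only [sum_walsh_mul_walsh, mul_ite, mul_zero, sum_ite_eq, mem_univ, if_true, mul_sum]
        refine sum_congr rfl fun x _ => ?_
        ring

/-- For a single query `φ`, the deviation of its mean under the parity labelling `p_s` from its
mean under a uniform label is, up to sign, the `s`-th Walsh coefficient of
`x ↦ (φ (x, 0) - φ (x, 1)) / 2`; Parseval then bounds the sum of squares by `B ^ 2`. -/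
lemma sum_sq_mean_sub_le {n : ℕ} (B : ℝ) (φ : (Fin n → Bool) × Bool → ℝ)
    (hφ : ∀ z, |φ z| ≤ B) :
    ∑ s : Finset (Fin n), ((∑ x : Fin n → Bool, ∑ y : Bool, ((2 : ℝ) ^ (n + 1))⁻¹ * φ (x, y)) -
      ∑ x : Fin n → Bool, ((2 : ℝ) ^ n)⁻¹ * φ (x, parity s x)) ^ 2 ≤ B ^ 2 := by
  set f : (Fin n → Bool) → ℝ := fun x => (φ (x, true) - φ (x, false)) / 2 with hf
  have hcoef : ∀ s : Finset (Fin n),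
      (∑ x : Fin n → Bool, ∑ y : Bool, ((2 : ℝ) ^ (n + 1))⁻¹ * φ (x, y)) -
        ∑ x : Fin n → Bool, ((2 : ℝ) ^ n)⁻¹ * φ (x, parity s x)
      = ((2 : ℝ) ^ n)⁻¹ * ∑ x, walsh s x * f x := by
    intro s
    rw [← sum_sub_distrib, mul_sum]
    refine sum_congr rfl fun x _ => ?_
    rw [walsh_eq_ite_parity, Fintype.sum_bool, pow_succ, mul_inv]
    cases parity s x <;> simp [hf] <;> ring
  simp only [hcoef, mul_pow]
  rw [← mul_sum, sum_sq_walsh_transform]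
  have hfB : ∀ x, f x ^ 2 ≤ B ^ 2 := by
    intro x
    have h1 := abs_le.mp (hφ (x, true))
    have h2 := abs_le.mp (hφ (x, false))
    apply sq_le_sq'
    · simp only [hf]; linarith
    · simp only [hf]; linarith
  have hsum : ∑ x, f x ^ 2 ≤ 2 ^ n * B ^ 2 := by
    calc ∑ x, f x ^ 2 ≤ ∑ _x : Fin n → Bool, B ^ 2 := sum_le_sum fun x _ => hfB x
      _ = 2 ^ n * B ^ 2 := by simp
  calc (((2 : ℝ) ^ n)⁻¹) ^ 2 * (2 ^ n * ∑ x, f x ^ 2)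
      ≤ (((2 : ℝ) ^ n)⁻¹) ^ 2 * (2 ^ n * (2 ^ n * B ^ 2)) := by gcongr
    _ = B ^ 2 := by field_simp

theorem stmt10 (n m : ℕ) (hn : 0 < n) (hm : 0 < m) (B σ : ℝ) (hB : 0 < B) (hσ : 0 < σ)
    (ψ : Fin m → (Fin n → Bool) × Bool → ℝ) (hψ : ∀ e z, |ψ e z| ≤ B) :
    -- Σ_{s⊆[n]} ‖N(w⋆,σ²I) − N(w^{(s)},σ²I)‖₁ ≤ B·√(m·2^{n+1}/(πσ²))
    ∑ s : Finset (Fin n),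
        ∫ v : Fin m → ℝ,
          |gaussDensity m σ
              (fun e => ∑ x : Fin n → Bool, ∑ y : Bool, ((2 : ℝ) ^ (n + 1))⁻¹ * ψ e (x, y)) v -
            gaussDensity m σ
              (fun e => ∑ x : Fin n → Bool, ((2 : ℝ) ^ n)⁻¹ * ψ e (x, parity s x)) v| ≤
      B * Real.sqrt (m * 2 ^ (n + 1) / (Real.pi * σ ^ 2)) := by
  set a : Fin m → ℝ :=
    fun e => ∑ x : Fin n → Bool, ∑ y : Bool, ((2 : ℝ) ^ (n + 1))⁻¹ * ψ e (x, y) with ha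
  set b : Finset (Fin n) → Fin m → ℝ :=
    fun s e => ∑ x : Fin n → Bool, ((2 : ℝ) ^ n)⁻¹ * ψ e (x, parity s x) with hb
  set r : Finset (Fin n) → ℝ := fun s => Real.sqrt (∑ e, (a e - b s e) ^ 2) with hr
  have hsq : ∑ s, r s ^ 2 ≤ m * B ^ 2 := by
    calc ∑ s, r s ^ 2 = ∑ e, ∑ s, (a e - b s e) ^ 2 := by
          rw [sum_comm]
          exact sum_congr rfl fun s _ => Real.sq_sqrt (sum_nonneg fun e _ => sq_nonneg _)
      _ ≤ ∑ _e : Fin m, B ^ 2 := sum_le_sum fun e _ => sum_sq_mean_sub_le B (ψ e) (hψ e)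
      _ = m * B ^ 2 := by simp
  have hcs : ∑ s, r s ≤ B * Real.sqrt (m * 2 ^ n) := by
    have h1 : (∑ s, r s) ^ 2 ≤ B ^ 2 * (m * 2 ^ n) := by
      calc (∑ s, r s) ^ 2 ≤ (univ : Finset (Finset (Fin n))).card * ∑ s, r s ^ 2 :=
            sq_sum_le_card_mul_sum_sq
        _ = 2 ^ n * ∑ s, r s ^ 2 := by simp
        _ ≤ 2 ^ n * (m * B ^ 2) := by gcongr
        _ = B ^ 2 * (m * 2 ^ n) := by ring
    calc ∑ s, r s ≤ Real.sqrt (B ^ 2 * (m * 2 ^ n)) := Real.le_sqrt_of_sq_le h1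
      _ = B * Real.sqrt (m * 2 ^ n) := by
        rw [Real.sqrt_mul (sq_nonneg B), Real.sqrt_sq hB.le]
  calc _ ≤ ∑ s, 2 / Real.sqrt (2 * Real.pi * σ ^ 2) * r s :=
        sum_le_sum fun s _ => integral_abs_gaussDensity_sub_le m hm σ hσ a (b s)
    _ = 2 / Real.sqrt (2 * Real.pi * σ ^ 2) * ∑ s, r s := by rw [mul_sum]
    _ ≤ 2 / Real.sqrt (2 * Real.pi * σ ^ 2) * (B * Real.sqrt (m * 2 ^ n)) := by gcongr
    _ = B * Real.sqrt (m * 2 ^ (n + 1) / (Real.pi * σ ^ 2)) := by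
      have hfac : (m : ℝ) * 2 ^ (n + 1) / (Real.pi * σ ^ 2)
          = 2 ^ 2 * (m * 2 ^ n) / (2 * Real.pi * σ ^ 2) := by
        field_simp
        ring
      rw [hfac, Real.sqrt_div (by positivity), Real.sqrt_mul (by positivity) (m * 2 ^ n : ℝ),
        Real.sqrt_sq (by norm_num : (0 : ℝ) ≤ 2)]
      ring
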